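/- Assume Σ_{k=1}^K c_k ≤ A ω. Let η_c > 0 and let η₀ be a bounded measurable ω-periodic function with inf_x η₀(x) > η_c. Then the rupture time satisfies t_r(η₀) ≤ (1/α) · log( (ω^{−1} ∫₀^ω η₀(x) dx) / η_c ); in particular t_r(η₀) is finite. -/

import Mathlib

open Real MeasureTheory Filter Topology intervalIntegral

/-- One-dimensional Gauss (heat) kernel `G_t(x) = (4πt)^{−1/2} exp(−x²/(4t))`. -/
noncomputable def heatKernel (t x : ℝ) : ℝ :=
  (4 * Real.pi * t) ^ (-(1 : ℝ) / 2) * Real.exp (-x ^ 2 / (4 * t))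

/-- The `ω`-periodized heat kernel `Ĝ_t(x) = Σ_{j ∈ ℤ} G_t(x − jω)`. -/
noncomputable def perHeatKernel (ω t x : ℝ) : ℝ :=
  ∑' j : ℤ, heatKernel t (x - (j : ℝ) * ω)

/-- Mild solution of `η_t = σ η_xx − α η + Σ_{k} c_k δ(x − a_k) − A` with initial data `η₀`:
`(S(t)η₀)(x) = e^{−αt} ∫ G_{σt}(x − y) η₀(y) dy
  + Σ_k c_k ∫₀^t e^{−ατ} Ĝ_{στ}(x − a_k) dτ − A(1 − e^{−αt})/α` for `t > 0`,
and `S(0)η₀ = η₀`. -/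
noncomputable def mildSol (ω σ α A : ℝ) {K : ℕ} (a c : Fin K → ℝ)
    (η₀ : ℝ → ℝ) (t x : ℝ) : ℝ :=
  if t = 0 then η₀ x else
    Real.exp (-(α * t)) * (∫ y : ℝ, heatKernel (σ * t) (x - y) * η₀ y)
      + (∑ k : Fin K, c k * ∫ τ in (0:ℝ)..t,
          Real.exp (-(α * τ)) * perHeatKernel ω (σ * τ) (x - a k))
      - A * (1 - Real.exp (-(α * t))) / α

/-- Rupture time for the threshold `η_c`:
`t_r(η₀) = sup{ t ≥ 0 : inf_x (S(t)η₀)(x) > η_c }`. -/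
noncomputable def ruptureTime (ω σ α A : ℝ) {K : ℕ} (a c : Fin K → ℝ)
    (ηc : ℝ) (η₀ : ℝ → ℝ) : ℝ :=
  sSup {t : ℝ | 0 ≤ t ∧ ηc < ⨅ x : ℝ, mildSol ω σ α A a c η₀ t x}

lemma heatKernel_nonneg {t : ℝ} (ht : 0 ≤ t) (x : ℝ) : 0 ≤ heatKernel t x := by
  unfold heatKernel
  positivity

lemma measurable_uncurry_heatKernel : Measurable fun p : ℝ × ℝ => heatKernel p.1 p.2 := by
  unfold heatKernel
  fun_prop

lemma measurable_uncurry_perHeatKernel (ω : ℝ) :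
    Measurable fun p : ℝ × ℝ => perHeatKernel ω p.1 p.2 := by
  unfold perHeatKernel
  refine Measurable.tsum fun j => ?_
  exact measurable_uncurry_heatKernel.comp
    (measurable_fst.prodMk (measurable_snd.sub_const ((j : ℝ) * ω)))

lemma measurable_heatKernel (t : ℝ) : Measurable (heatKernel t) :=
  measurable_uncurry_heatKernel.comp (measurable_const.prodMk measurable_id)

lemma heatKernel_eq_mul_exp (t : ℝ) :
    heatKernel t = fun x => (4 * π * t) ^ (-(1 : ℝ) / 2) * rexp (-(1 / (4 * t)) * x ^ 2) := by
  funext x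
  unfold heatKernel
  congr 2
  ring

lemma integrable_heatKernel {t : ℝ} (ht : 0 < t) : Integrable (heatKernel t) := by
  rw [heatKernel_eq_mul_exp]
  exact (integrable_exp_neg_mul_sq (by positivity)).const_mul _

lemma integral_heatKernel {t : ℝ} (ht : 0 < t) : ∫ x, heatKernel t x = 1 := by
  have h : 0 < 4 * π * t := by positivity
  rw [heatKernel_eq_mul_exp, MeasureTheory.integral_const_mul, integral_gaussian,
    show π / (1 / (4 * t)) = 4 * π * t by field_simp, Real.sqrt_eq_rpow, ← Real.rpow_add h]
  norm_num

lemma lintegral_heatKernel {t : ℝ} (ht : 0 < t) :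
    ∫⁻ x, ENNReal.ofReal (heatKernel t x) = 1 := by
  rw [← ofReal_integral_eq_lintegral_ofReal (integrable_heatKernel ht)
    (ae_of_all _ (heatKernel_nonneg ht.le)), integral_heatKernel ht, ENNReal.ofReal_one]

lemma perHeatKernel_nonneg (ω : ℝ) {t : ℝ} (ht : 0 ≤ t) (x : ℝ) : 0 ≤ perHeatKernel ω t x :=
  tsum_nonneg fun _ => heatKernel_nonneg ht _

lemma perHeatKernel_eq_toReal (ω : ℝ) {t : ℝ} (ht : 0 ≤ t) (x : ℝ) :
    perHeatKernel ω t x = (∑' j : ℤ, ENNReal.ofReal (heatKernel t (x - j * ω))).toReal := by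
  rw [ENNReal.tsum_toReal_eq fun _ => ENNReal.ofReal_ne_top]
  simp only [ENNReal.toReal_ofReal (heatKernel_nonneg ht _), perHeatKernel]

/-- Unfolding: summing the integrals over `(0, ω]` of all `ω`-translates of `f` gives the integral
of `f` over the line. -/
lemma tsum_setLIntegral_sub_mul_period {ω : ℝ} (hω : 0 < ω) {f : ℝ → ENNReal} (hf : Measurable f) :
    ∑' j : ℤ, ∫⁻ x in Set.Ioc 0 ω, f (x - j * ω) = ∫⁻ x, f x := by
  rw [← setLIntegral_univ f, ← iUnion_Ioc_zsmul hω, lintegral_iUnion (fun _ => measurableSet_Ioc)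
    (by simpa using Set.pairwise_disjoint_Ioc_add_zsmul (0 : ℝ) ω), ← (Equiv.neg ℤ).tsum_eq]
  refine tsum_congr fun j => ?_
  rw [← (measurePreserving_sub_right volume (((-j : ℤ) : ℝ) * ω)).setLIntegral_comp_preimage
    measurableSet_Ioc hf]
  congr 2
  rw [Set.preimage_sub_const_Ioc]
  simp
  ring_nf

lemma setLIntegral_tsum_heatKernel {ω t : ℝ} (hω : 0 < ω) (ht : 0 < t) (b : ℝ) :
    ∫⁻ x in Set.Ioc 0 ω, ∑' j : ℤ, ENNReal.ofReal (heatKernel t (x - b - j * ω)) = 1 := by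
  have hm : Measurable fun x => ENNReal.ofReal (heatKernel t (x - b)) :=
    ((measurable_heatKernel t).comp (measurable_id.sub_const b)).ennreal_ofReal
  have hj : ∀ j : ℤ, Measurable fun x => ENNReal.ofReal (heatKernel t (x - b - j * ω)) := fun j =>
    ((measurable_heatKernel t).comp ((measurable_id.sub_const b).sub_const _)).ennreal_ofReal
  rw [lintegral_tsum fun j => (hj j).aemeasurable]
  have h := tsum_setLIntegral_sub_mul_period hω hm
  rw [lintegral_sub_right_eq_self (fun x => ENNReal.ofReal (heatKernel t x)) b,
    lintegral_heatKernel ht] at h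
  rw [← h]
  simp only [sub_right_comm]

lemma measurable_tsum_heatKernel (ω t b : ℝ) :
    Measurable fun x => ∑' j : ℤ, ENNReal.ofReal (heatKernel t (x - b - j * ω)) :=
  Measurable.tsum fun _ => ((measurable_heatKernel t).comp
    ((measurable_id.sub_const b).sub_const _)).ennreal_ofReal

lemma integrableOn_perHeatKernel {ω t : ℝ} (hω : 0 < ω) (ht : 0 < t) (b : ℝ) :
    IntegrableOn (fun x => perHeatKernel ω t (x - b)) (Set.Ioc 0 ω) := by
  simp only [perHeatKernel_eq_toReal ω ht.le]
  refine integrable_toReal_of_lintegral_ne_top (measurable_tsum_heatKernel ω t b).aemeasurable ?_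
  rw [setLIntegral_tsum_heatKernel hω ht b]
  exact ENNReal.one_ne_top

lemma setIntegral_perHeatKernel {ω t : ℝ} (hω : 0 < ω) (ht : 0 < t) (b : ℝ) :
    ∫ x in Set.Ioc 0 ω, perHeatKernel ω t (x - b) = 1 := by
  have h := setLIntegral_tsum_heatKernel hω ht b
  simp only [perHeatKernel_eq_toReal ω ht.le]
  rw [integral_toReal (measurable_tsum_heatKernel ω t b).aemeasurable
    (ae_lt_top (measurable_tsum_heatKernel ω t b) (by rw [h]; exact ENNReal.one_ne_top)), h,
    ENNReal.toReal_one]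

lemma integrable_uncurry_source {ω σ : ℝ} (hω : 0 < ω) (hσ : 0 < σ) (α t b : ℝ) :
    Integrable (fun p : ℝ × ℝ => rexp (-(α * p.1)) * perHeatKernel ω (σ * p.1) (p.2 - b))
      ((volume.restrict (Set.Ioc 0 t)).prod (volume.restrict (Set.Ioc 0 ω))) := by
  have hm : Measurable fun p : ℝ × ℝ =>
      rexp (-(α * p.1)) * perHeatKernel ω (σ * p.1) (p.2 - b) := by
    refine Measurable.mul (by fun_prop) ?_
    exact (measurable_uncurry_perHeatKernel ω).comp
      ((measurable_fst.const_mul σ).prodMk (measurable_snd.sub_const b))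
  rw [integrable_prod_iff hm.aestronglyMeasurable]
  constructor
  · filter_upwards [ae_restrict_mem measurableSet_Ioc] with τ hτ
    exact (integrableOn_perHeatKernel hω (mul_pos hσ hτ.1) b).const_mul _
  · have hc : IntegrableOn (fun τ => rexp (-(α * τ))) (Set.Ioc 0 t) :=
      (Continuous.integrableOn_Icc (by fun_prop)).mono_set Set.Ioc_subset_Icc_self
    refine hc.congr ?_
    filter_upwards [ae_restrict_mem measurableSet_Ioc] with τ hτ
    have hs := mul_pos hσ hτ.1
    simp only [norm_mul, Real.norm_of_nonneg (exp_pos _).le,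
      Real.norm_of_nonneg (perHeatKernel_nonneg ω hs.le _)]
    rw [MeasureTheory.integral_const_mul, setIntegral_perHeatKernel hω hs b, mul_one]

lemma integrableOn_source {ω σ t : ℝ} (hω : 0 < ω) (hσ : 0 < σ) (ht : 0 ≤ t) (α b : ℝ) :
    IntegrableOn (fun x => ∫ τ in (0 : ℝ)..t, rexp (-(α * τ)) * perHeatKernel ω (σ * τ) (x - b))
      (Set.Ioc 0 ω) := by
  simp only [intervalIntegral.integral_of_le ht]
  exact (integrable_uncurry_source hω hσ α t b).integral_prod_right

lemma integral_exp_neg_mul {α : ℝ} (hα : α ≠ 0) (t : ℝ) :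
    ∫ τ in (0 : ℝ)..t, rexp (-(α * τ)) = (1 - rexp (-(α * t))) / α := by
  have h : ∀ τ ∈ Set.uIcc 0 t, HasDerivAt (fun s => -rexp (-(α * s)) / α) (rexp (-(α * τ))) τ := by
    intro τ _
    have h1 : HasDerivAt (fun s => -(α * s)) (-α) τ := by
      simpa using (hasDerivAt_id τ).const_mul (-α)
    simpa [hα] using h1.exp.neg.div_const α
  rw [intervalIntegral.integral_eq_sub_of_hasDerivAt h
    (Continuous.intervalIntegrable (by fun_prop) _ _)]
  simp
  ring

lemma setIntegral_source {ω σ α t : ℝ} (hω : 0 < ω) (hσ : 0 < σ) (hα : α ≠ 0) (ht : 0 ≤ t)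
    (b : ℝ) :
    ∫ x in Set.Ioc 0 ω, ∫ τ in (0 : ℝ)..t, rexp (-(α * τ)) * perHeatKernel ω (σ * τ) (x - b)
      = (1 - rexp (-(α * t))) / α := by
  rw [← integral_exp_neg_mul hα]
  simp only [intervalIntegral.integral_of_le ht]
  rw [← integral_integral_swap (integrable_uncurry_source hω hσ α t b)]
  refine setIntegral_congr_fun measurableSet_Ioc fun τ hτ => ?_
  rw [MeasureTheory.integral_const_mul, setIntegral_perHeatKernel hω (mul_pos hσ hτ.1) b, mul_one]

lemma integrable_uncurry_heatKernel_mul {t : ℝ} (ht : 0 < t) (ω : ℝ) {f : ℝ → ℝ}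
    (hf : Measurable f) (hb : ∃ M, ∀ x, |f x| ≤ M) :
    Integrable (fun p : ℝ × ℝ => heatKernel t p.2 * f (p.1 - p.2))
      ((volume.restrict (Set.Ioc 0 ω)).prod volume) := by
  obtain ⟨M, hM⟩ := hb
  have h := (integrable_heatKernel ht).comp_snd (volume.restrict (Set.Ioc 0 ω))
  have h' := h.bdd_mul (f := fun p : ℝ × ℝ => f (p.1 - p.2)) (c := M)
    (hf.comp (measurable_fst.sub measurable_snd)).aestronglyMeasurable (ae_of_all _ fun p => hM _)
  simpa only [mul_comm] using h'

lemma heatKernel_convolution_comm (t x : ℝ) (f : ℝ → ℝ) :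
    ∫ y, heatKernel t (x - y) * f y = ∫ y, heatKernel t y * f (x - y) := by
  rw [← integral_sub_left_eq_self _ volume x]
  simp

lemma integrableOn_heatKernel_convolution {t : ℝ} (ht : 0 < t) (ω : ℝ) {f : ℝ → ℝ}
    (hf : Measurable f) (hb : ∃ M, ∀ x, |f x| ≤ M) :
    IntegrableOn (fun x => ∫ y, heatKernel t (x - y) * f y) (Set.Ioc 0 ω) := by
  simp only [heatKernel_convolution_comm]
  exact (integrable_uncurry_heatKernel_mul ht ω hf hb).integral_prod_left

/-- Convolution with the heat kernel preserves the integral of a periodic function over a period. -/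
lemma setIntegral_heatKernel_convolution {ω t : ℝ} (hω : 0 < ω) (ht : 0 < t) {f : ℝ → ℝ}
    (hf : Measurable f) (hb : ∃ M, ∀ x, |f x| ≤ M) (hper : Function.Periodic f ω) :
    ∫ x in Set.Ioc 0 ω, ∫ y, heatKernel t (x - y) * f y = ∫ x in (0 : ℝ)..ω, f x := by
  simp only [heatKernel_convolution_comm]
  rw [integral_integral_swap (integrable_uncurry_heatKernel_mul ht ω hf hb)]
  have h : ∀ y, ∫ x in Set.Ioc 0 ω, f (x - y) = ∫ x in (0 : ℝ)..ω, f x := fun y => by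
    rw [← intervalIntegral.integral_of_le hω.le, intervalIntegral.integral_comp_sub_right]
    simpa [sub_eq_neg_add] using hper.intervalIntegral_add_eq (-y) 0
  simp only [MeasureTheory.integral_const_mul, h]
  rw [MeasureTheory.integral_mul_const, integral_heatKernel ht, one_mul]

/-- The mild solution is integrable over a period, and its total mass there is explicit. -/
lemma mildSol_mass {ω σ α t : ℝ} (A : ℝ) {K : ℕ} (a c : Fin K → ℝ) (hω : 0 < ω) (hσ : 0 < σ)
    (hα : α ≠ 0) (ht : 0 < t) {f : ℝ → ℝ} (hf : Measurable f) (hb : ∃ M, ∀ x, |f x| ≤ M)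
    (hper : Function.Periodic f ω) :
    IntegrableOn (mildSol ω σ α A a c f t) (Set.Ioc 0 ω) ∧
    ∫ x in Set.Ioc 0 ω, mildSol ω σ α A a c f t x
      = rexp (-(α * t)) * (∫ x in (0 : ℝ)..ω, f x)
        + (∑ k, c k - A * ω) * ((1 - rexp (-(α * t))) / α) := by
  have h1 := (integrableOn_heatKernel_convolution (mul_pos hσ ht) ω hf hb).const_mul
    (rexp (-(α * t)))
  have h2 : ∀ k, IntegrableOn (fun x => c k * ∫ τ in (0 : ℝ)..t,
      rexp (-(α * τ)) * perHeatKernel ω (σ * τ) (x - a k)) (Set.Ioc 0 ω) :=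
    fun k => (integrableOn_source hω hσ ht.le α (a k)).const_mul (c k)
  have h3 := integrable_finsetSum Finset.univ fun k _ => h2 k
  have h4 : IntegrableOn (fun _ : ℝ => A * (1 - rexp (-(α * t))) / α) (Set.Ioc 0 ω) :=
    integrableOn_const (by simp)
  have heq : mildSol ω σ α A a c f t = fun x =>
      rexp (-(α * t)) * (∫ y : ℝ, heatKernel (σ * t) (x - y) * f y)
        + (∑ k : Fin K, c k * ∫ τ in (0 : ℝ)..t,
            rexp (-(α * τ)) * perHeatKernel ω (σ * τ) (x - a k))
        - A * (1 - rexp (-(α * t))) / α := by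
    funext x
    simp [mildSol, ht.ne']
  rw [heq]
  have h13 : IntegrableOn (fun x =>
      rexp (-(α * t)) * (∫ y : ℝ, heatKernel (σ * t) (x - y) * f y)
        + ∑ k : Fin K, c k * ∫ τ in (0 : ℝ)..t,
            rexp (-(α * τ)) * perHeatKernel ω (σ * τ) (x - a k)) (Set.Ioc 0 ω) := h1.add h3
  refine ⟨h13.sub h4, ?_⟩
  rw [MeasureTheory.integral_sub h13 h4, MeasureTheory.integral_add h1 h3, MeasureTheory.integral_finsetSum _ fun k _ => h2 k]
  simp only [MeasureTheory.integral_const_mul, setIntegral_source hω hσ hα ht.le,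
    setIntegral_heatKernel_convolution hω (mul_pos hσ ht) hf hb hper, ← Finset.sum_mul]
  simp [hω.le]
  ring

lemma lt_of_lt_iInf_of_nonneg {ι : Sort*} {f : ι → ℝ} {m : ℝ} (hm : 0 ≤ m) (h : m < ⨅ i, f i)
    (i : ι) : m < f i := by
  by_cases hb : BddBelow (Set.range f)
  · exact h.trans_le (ciInf_le hb i)
  · rw [Real.iInf_of_not_bddBelow hb] at h
    exact absurd h hm.not_gt

lemma mul_le_setIntegral_of_le {ω m : ℝ} (hω : 0 ≤ ω) {f : ℝ → ℝ}
    (hf : IntegrableOn f (Set.Ioc 0 ω)) (h : ∀ x, m ≤ f x) :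
    m * ω ≤ ∫ x in Set.Ioc 0 ω, f x := by
  have := setIntegral_mono (integrableOn_const (C := m) (by simp)) hf h
  simpa [hω, mul_comm] using this

/-- Proposition 2.3. If `Σ_k c_k ≤ Aω`, `η_c > 0` and `η₀` is a bounded
measurable `ω`-periodic function with `inf η₀ > η_c`, then the rupture time satisfies
`t_r(η₀) ≤ α⁻¹ log((ω⁻¹ ∫₀^ω η₀)/η_c)`; in particular it is finite. -/
theorem ruptureTime_le (ω σ α A ηc : ℝ) (K : ℕ) (a c : Fin K → ℝ)
    (hω : 0 < ω) (hσ : 0 < σ) (hα : 0 < α)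
    (ha0 : ∀ k, 0 ≤ a k) (haω : ∀ k, a k < ω) (hamono : StrictMono a)
    (hC : ∑ k : Fin K, c k ≤ A * ω)
    (hηc : 0 < ηc)
    (η₀ : ℝ → ℝ) (hmeas : Measurable η₀)
    (hbdd : ∃ M, ∀ x, |η₀ x| ≤ M) (hper : ∀ x, η₀ (x + ω) = η₀ x)
    (hinf : ηc < ⨅ x : ℝ, η₀ x) :
    ruptureTime ω σ α A a c ηc η₀ ≤
      (1 / α) * Real.log ((ω⁻¹ * ∫ x in (0:ℝ)..ω, η₀ x) / ηc) ∧
    BddAbove {t : ℝ | 0 ≤ t ∧ ηc < ⨅ x : ℝ, mildSol ω σ α A a c η₀ t x} := by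
  have hbound : ∀ t ∈ {t : ℝ | 0 ≤ t ∧ ηc < ⨅ x : ℝ, mildSol ω σ α A a c η₀ t x},
      t ≤ (1 / α) * Real.log ((ω⁻¹ * ∫ x in (0:ℝ)..ω, η₀ x) / ηc) := by
    rintro t ⟨ht, hlt⟩
    have hpt : ∀ x, ηc ≤ mildSol ω σ α A a c η₀ t x :=
      fun x => (lt_of_lt_iInf_of_nonneg hηc.le hlt x).le
    have hmass : ηc * ω ≤ rexp (-(α * t)) * ∫ x in (0 : ℝ)..ω, η₀ x := by
      rcases ht.eq_or_lt with rfl | ht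
      · obtain ⟨M, hM⟩ := hbdd
        have hint : IntegrableOn η₀ (Set.Ioc 0 ω) :=
          Measure.integrableOn_of_bounded (by simp) hmeas.aestronglyMeasurable
            (ae_of_all _ hM)
        have := mul_le_setIntegral_of_le hω.le hint (by simpa [mildSol] using hpt)
        simpa [intervalIntegral.integral_of_le hω.le] using this
      · obtain ⟨hint, heq⟩ := mildSol_mass A a c hω hσ hα.ne' ht hmeas hbdd hper
        have h := mul_le_setIntegral_of_le hω.le hint hpt
        have hexp : 0 ≤ (1 - rexp (-(α * t))) / α :=
          div_nonneg (sub_nonneg.2 (Real.exp_le_one_iff.2 (by nlinarith))) hα.le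
        have := mul_nonpos_of_nonpos_of_nonneg (sub_nonpos.2 hC) hexp
        linarith
    have hkey : rexp (α * t) ≤ (ω⁻¹ * ∫ x in (0 : ℝ)..ω, η₀ x) / ηc := by
      rw [Real.exp_neg, inv_mul_eq_div, le_div_iff₀ (Real.exp_pos _)] at hmass
      rw [le_div_iff₀ hηc, inv_mul_eq_div, le_div_iff₀ hω]
      linarith
    have hlog := (Real.le_log_iff_exp_le ((Real.exp_pos _).trans_le hkey)).2 hkey
    rw [one_div, inv_mul_eq_div, le_div_iff₀ hα]
    linarith
  exact ⟨csSup_le ⟨0, le_rfl, by simpa [mildSol] using hinf⟩ hbound, _, hbound⟩
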